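/- arXiv:1105.5790 — 6 statements merged into one kernel-verified Lean document; each statement's English description precedes it below -/
import Mathlib

section
/- Let k > 0 and, for t ∈ ℝ, set T(t) = [[1, 2kt], [0, 1]]. If B ∈ SL(2,ℝ) has column angles (α, β) with radii (r, s) and α < β < α + 2π, then for every t ∈ ℝ: cotθ(T(t)·B) = 4k²·(sin β · sin α / sin(β − α))·t² + 2k·(sin(β + α)/sin(β − α))·t + cos(β − α)/sin(β − α). -/
/-! The determinant condition reads `r * s * sin (β - α) = 1`, so dividing by `sin (β - α)` amounts
to multiplying by `r * s`. The dot product of the sheared columns is `r * s` times a quadratic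
polynomial in `t`, whose linear and constant coefficients are `2 * k * sin (β + α)` and
`cos (β - α)` by the angle-addition formulas. -/

/-- `cotTheta M = M₁₁M₁₂ + M₂₁M₂₂`, the dot product of the two columns of `M`. -/
def cotTheta (M : Matrix (Fin 2) (Fin 2) ℝ) : ℝ :=
  M 0 0 * M 0 1 + M 1 0 * M 1 1

theorem stmt_2 (k : ℝ) (hk : 0 < k)
    (B : Matrix (Fin 2) (Fin 2) ℝ) (hB : B.det = 1)
    (r s α β : ℝ) (hr : 0 < r) (hs : 0 < s)
    (h00 : B 0 0 = r * Real.cos α) (h10 : B 1 0 = r * Real.sin α)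
    (h01 : B 0 1 = s * Real.cos β) (h11 : B 1 1 = s * Real.sin β)
    (hαβ : α < β) (hβ : β < α + 2 * Real.pi) (t : ℝ) :
    cotTheta (!![1, 2 * k * t; 0, 1] * B) =
      4 * k ^ 2 * (Real.sin β * Real.sin α / Real.sin (β - α)) * t ^ 2
        + 2 * k * (Real.sin (β + α) / Real.sin (β - α)) * t
        + Real.cos (β - α) / Real.sin (β - α) := by
  have hdet : r * s * Real.sin (β - α) = 1 := by
    rw [Matrix.det_fin_two, h00, h01, h10, h11] at hB
    rw [Real.sin_sub]
    linarith
  have hinv : (Real.sin (β - α))⁻¹ = r * s := (eq_inv_of_mul_eq_one_left hdet).symm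
  simp only [div_eq_mul_inv, hinv, Real.sin_add, Real.cos_sub, cotTheta, Matrix.mul_apply,
    Fin.sum_univ_two, h00, h01, h10, h11]
  simp
  ring
end

section
/- Let n ≥ 4 be an integer, c = cot(π/(2n)), and let α, β be real numbers with 0 < α < β ≤ π/(2n). Then c²·(sin α · sin β / sin(β − α)) − c·(sin(β + α)/sin(β − α)) + cos(β − α)/sin(β − α) > 0. -/
/-!
With `θ = π / (2n)` and `c = cot θ`, the numerator over the common denominator `sin (β - α)` is
`(cos α - c sin α) (cos β - c sin β) + sin α sin β`. Each factor `cos x - c sin x` equals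
`sin (θ - x) / sin θ`, which is nonnegative for `0 < x ≤ θ`, and `sin α sin β > 0`.
-/

theorem cos_sub_cot_mul_sin_nonneg {θ x : ℝ} (hx : 0 < x) (hxθ : x ≤ θ) (hθ : θ < Real.pi) :
    0 ≤ Real.cos x - Real.cot θ * Real.sin x := by
  have hs : 0 < Real.sin θ := Real.sin_pos_of_pos_of_lt_pi (by linarith) hθ
  have h : Real.cos x - Real.cot θ * Real.sin x = Real.sin (θ - x) / Real.sin θ := by
    rw [Real.cot_eq_cos_div_sin, Real.sin_sub]
    field_simp
  rw [h]
  exact div_nonneg (Real.sin_nonneg_of_nonneg_of_le_pi (by linarith) (by linarith)) hs.le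

theorem stmt_4 (n : ℕ) (hn : 4 ≤ n) (c : ℝ) (hc : c = Real.cot (Real.pi / (2 * n)))
    (α β : ℝ) (hα : 0 < α) (hαβ : α < β) (hβ : β ≤ Real.pi / (2 * n)) :
    c ^ 2 * (Real.sin α * Real.sin β / Real.sin (β - α))
      - c * (Real.sin (β + α) / Real.sin (β - α))
      + Real.cos (β - α) / Real.sin (β - α) > 0 := by
  have hn' : (4 : ℝ) ≤ n := by exact_mod_cast hn
  have hθ : Real.pi / (2 * n) < Real.pi := div_lt_self Real.pi_pos (by linarith)
  have ha := cos_sub_cot_mul_sin_nonneg hα (hαβ.le.trans hβ) hθ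
  have hb := cos_sub_cot_mul_sin_nonneg (hα.trans hαβ) hβ hθ
  rw [← hc] at ha hb
  have hsa : 0 < Real.sin α := Real.sin_pos_of_pos_of_lt_pi hα (by linarith)
  have hsb : 0 < Real.sin β := Real.sin_pos_of_pos_of_lt_pi (by linarith) (by linarith)
  have hs : 0 < Real.sin (β - α) := Real.sin_pos_of_pos_of_lt_pi (by linarith) (by linarith)
  have key : c ^ 2 * (Real.sin α * Real.sin β / Real.sin (β - α))
      - c * (Real.sin (β + α) / Real.sin (β - α))
      + Real.cos (β - α) / Real.sin (β - α)
      = ((Real.cos α - c * Real.sin α) * (Real.cos β - c * Real.sin β)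
          + Real.sin α * Real.sin β) / Real.sin (β - α) := by
    rw [Real.sin_add, Real.cos_sub]
    ring
  rw [key]
  exact div_pos (add_pos_of_nonneg_of_pos (mul_nonneg ha hb) (mul_pos hsa hsb)) hs
end

section
/- Let n ≥ 4 be an integer and T_{2n} = [[1, 2·cot(π/(2n))], [0, 1]] ∈ SL(2,ℝ). Let B ∈ SL(2,ℝ) have column angles (α, β) with radii (r, s), where 0 ≤ α < β ≤ π/(2n) and cot(β − α) > cot(π/(2n)). Then there exists a negative integer l such that |cotθ(T_{2n}^l · B)| < cotθ(B). -/
theorem stmt_7 (n : ℕ) (hn : 4 ≤ n)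
    (T : Matrix (Fin 2) (Fin 2) ℝ) (hT : T = !![1, 2 * Real.cot (Real.pi / (2 * n)); 0, 1])
    (B : Matrix (Fin 2) (Fin 2) ℝ) (hB : B.det = 1)
    (r s α β : ℝ) (hr : 0 < r) (hs : 0 < s)
    (h00 : B 0 0 = r * Real.cos α) (h10 : B 1 0 = r * Real.sin α)
    (h01 : B 0 1 = s * Real.cos β) (h11 : B 1 1 = s * Real.sin β)
    (hα : 0 ≤ α) (hαβ : α < β) (hβ : β ≤ Real.pi / (2 * n))
    (hcot : Real.cot (β - α) > Real.cot (Real.pi / (2 * n))) :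
    ∃ l : ℤ, l < 0 ∧ |cotTheta (T ^ l * B)| < cotTheta B := by
  have hpi := Real.pi_pos
  have hθ : Real.pi / (2 * n) ≤ Real.pi / 8 := by
    have : (4 : ℝ) ≤ n := by exact_mod_cast hn
    apply div_le_div_of_nonneg_left hpi.le (by norm_num)
    linarith
  set θ := Real.pi / (2 * n)
  have hsθ : 0 < Real.sin θ := Real.sin_pos_of_pos_of_lt_pi (by linarith) (by linarith)
  have hcθ : 0 < Real.cos θ := Real.cos_pos_of_mem_Ioo ⟨by linarith, by linarith⟩
  have hsα : 0 ≤ Real.sin α := Real.sin_nonneg_of_nonneg_of_le_pi hα (by linarith)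
  have hsβ : 0 < Real.sin β := Real.sin_pos_of_pos_of_lt_pi (by linarith) (by linarith)
  have hsd : 0 < Real.sin (β - α) := Real.sin_pos_of_pos_of_lt_pi (by linarith) (by linarith)
  have hc : 0 < Real.cot θ := by
    rw [Real.cot_eq_cos_div_sin]; positivity
  have hbq : Real.cot θ * B 1 1 ≤ B 0 1 := by
    have h : 0 ≤ Real.sin (θ - β) :=
      Real.sin_nonneg_of_nonneg_of_le_pi (by linarith) (by linarith)
    rw [Real.sin_sub] at h
    have h' : Real.cot θ * Real.sin β ≤ Real.cos β := by
      rw [Real.cot_eq_cos_div_sin, div_mul_eq_mul_div, div_le_iff₀ hsθ]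
      linarith
    rw [h01, h11]
    nlinarith
  rw [Matrix.det_fin_two] at hB
  have hx : Real.cot θ < B 0 0 * B 0 1 + B 1 0 * B 1 1 := by
    have : Real.cot (β - α) = B 0 0 * B 0 1 + B 1 0 * B 1 1 := by
      have h1 : r * s * Real.sin (β - α) = 1 := by
        rw [Real.sin_sub, ← hB, h00, h01, h10, h11]; ring
      rw [Real.cot_eq_cos_div_sin, div_eq_iff hsd.ne']
      calc Real.cos (β - α) = Real.cos (β - α) * (r * s * Real.sin (β - α)) := by rw [h1, mul_one]
        _ = _ := by
          nth_rewrite 1 [Real.cos_sub]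
          rw [h00, h01, h10, h11]; ring
    linarith
  have hp : 0 ≤ B 1 0 := by rw [h10]; positivity
  have hq : 0 < B 1 1 := by rw [h11]; positivity
  have hinv : T ^ (-1 : ℤ) = !![1, -(2 * Real.cot θ); 0, 1] := by
    rw [Matrix.zpow_neg_one]
    apply Matrix.inv_eq_right_inv
    rw [hT]
    ext i j
    fin_cases i <;> fin_cases j <;> simp
  refine ⟨-1, by norm_num, ?_⟩
  rw [hinv]
  simp only [cotTheta, Matrix.mul_apply, Fin.sum_univ_two, Matrix.of_apply, Matrix.cons_val',
    Matrix.cons_val_zero, Matrix.cons_val_one, Matrix.cons_val_fin_one]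
  generalize Real.cot θ = c at *
  generalize B 0 0 = a at *
  generalize B 0 1 = b at *
  generalize B 1 0 = p at *
  generalize B 1 1 = q at *
  have hbp : c * q * p ≤ b * p := mul_le_mul_of_nonneg_right hbq hp
  have hap : 0 ≤ a - c * p := by
    have : 0 ≤ (a - c * p) * q := by nlinarith
    exact nonneg_of_mul_nonneg_left this hq
  rw [abs_lt]
  constructor
  · rcases hp.eq_or_lt with h0 | h0
    · subst h0
      have : a * q = 1 := by linarith
      have : c * (a * q) = c := by rw [this, mul_one]
      nlinarith
    · have h1 : 0 ≤ (a - c * p) * (b - c * q) := mul_nonneg hap (by linarith)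
      have h2 : 0 < (1 + c ^ 2) * (p * q) := by positivity
      nlinarith
  · have h3 : 0 < c * (a * q + b * p - 2 * c * p * q) := mul_pos hc (by linarith)
    nlinarith
end

section
/- Let n ≥ 4 be an integer and T_{2n} = [[1, 2·cot(π/(2n))], [0, 1]] ∈ SL(2,ℝ). Let B ∈ SL(2,ℝ) have column angles (α, β) with radii (r, s), where π − π/(2n) ≤ α < β ≤ π and cot(β − α) > cot(π/(2n)). Then there exists a positive integer l such that |cotθ(T_{2n}^l · B)| < cotθ(B). -/
/-- The algebraic core: `τ` is the cotangent, and `!![a, b; c, d]` is the matrix. -/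
lemma abs_cot_shear_lt {a b c d τ : ℝ} (hdet : a * d - b * c = 1) (hτ : 0 < τ) (hc : 0 < c)
    (hd : 0 ≤ d) (ha : τ * c ≤ -a) (hK : τ < a * b + c * d) :
    |(a + 2 * τ * c) * (b + 2 * τ * d) + c * d| < a * b + c * d := by
  have hx : 0 ≤ -a - τ * c := by linarith
  have hxd : 0 ≤ (-a - τ * c) * d := mul_nonneg hx hd
  have hy : 0 < -b - τ * d := by
    refine pos_of_mul_pos_left (b := c) ?_ hc.le
    nlinarith
  rw [abs_lt]
  constructor
  · have key : 0 < 2 * ((-a - τ * c) * (-b - τ * d)) + 2 * ((τ ^ 2 + 1) * (c * d)) := by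
      rcases hd.eq_or_lt with rfl | hd
      · have hb : 0 < -b := by linarith
        have : 0 < -a - τ * c := by
          refine pos_of_mul_pos_left (b := -b) ?_ hb.le
          linear_combination hK + τ * hdet
        have := mul_pos this hy
        linarith
      · have h1 := mul_nonneg hx hy.le
        have h2 : 0 < (τ ^ 2 + 1) * (c * d) := by positivity
        linarith
    linear_combination key
  · have key : 0 < 2 * τ * (2 * ((-a - τ * c) * d) + 1) := by positivity
    linear_combination key - 2 * τ * hdet

theorem stmt_8 (n : ℕ) (hn : 4 ≤ n)
    (T : Matrix (Fin 2) (Fin 2) ℝ) (hT : T = !![1, 2 * Real.cot (Real.pi / (2 * n)); 0, 1])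
    (B : Matrix (Fin 2) (Fin 2) ℝ) (hB : B.det = 1)
    (r s α β : ℝ) (hr : 0 < r) (hs : 0 < s)
    (h00 : B 0 0 = r * Real.cos α) (h10 : B 1 0 = r * Real.sin α)
    (h01 : B 0 1 = s * Real.cos β) (h11 : B 1 1 = s * Real.sin β)
    (hα : Real.pi - Real.pi / (2 * n) ≤ α) (hαβ : α < β) (hβ : β ≤ Real.pi)
    (hcot : Real.cot (β - α) > Real.cot (Real.pi / (2 * n))) :
    ∃ l : ℤ, 0 < l ∧ |cotTheta (T ^ l * B)| < cotTheta B := by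
  have hπ := Real.pi_pos
  have hn' : (4 : ℝ) ≤ n := by exact_mod_cast hn
  have hθ0 : 0 < Real.pi / (2 * n) := by positivity
  have hθ1 : Real.pi / (2 * n) < Real.pi / 2 := by
    apply div_lt_div_of_pos_left hπ <;> linarith
  set θ := Real.pi / (2 * n) with hθ
  have hsin : 0 < Real.sin θ := Real.sin_pos_of_pos_of_lt_pi hθ0 (by linarith)
  have hcos : 0 < Real.cos θ := Real.cos_pos_of_mem_Ioo ⟨by linarith, hθ1⟩
  have hτ : 0 < Real.cot θ := by rw [Real.cot_eq_cos_div_sin]; positivity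
  have hc : 0 < B 1 0 := by
    rw [h10]
    exact mul_pos hr (Real.sin_pos_of_pos_of_lt_pi (by linarith) (by linarith))
  have hd : 0 ≤ B 1 1 := by
    rw [h11]
    exact mul_nonneg hs.le (Real.sin_nonneg_of_nonneg_of_le_pi (by linarith) hβ)
  -- `τ sin α ≤ -cos α` is `sin (α + θ) ≤ 0`, where `α + θ ∈ [π, 2π]`.
  have ha : Real.cot θ * B 1 0 ≤ -B 0 0 := by
    have h := Real.sin_nonneg_of_nonneg_of_le_pi (x := α + θ - Real.pi) (by linarith) (by linarith)
    rw [Real.sin_sub_pi, Real.sin_add] at h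
    have h' : Real.cot θ * Real.sin α ≤ -Real.cos α := by
      rw [Real.cot_eq_cos_div_sin, div_mul_eq_mul_div, div_le_iff₀ hsin]
      linarith
    rw [h10, h00]
    nlinarith
  have hdet : B 0 0 * B 1 1 - B 0 1 * B 1 0 = 1 := by rw [← Matrix.det_fin_two, hB]
  -- `det B = r s sin (β - α) = 1` turns `cot (β - α)` into `r s cos (β - α)`.
  have hcotB : Real.cot (β - α) = B 0 0 * B 0 1 + B 1 0 * B 1 1 := by
    have h1 : Real.sin (β - α) ≠ 0 :=
      (Real.sin_pos_of_pos_of_lt_pi (by linarith) (by linarith)).ne'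
    rw [h00, h01, h10, h11] at hdet ⊢
    rw [Real.cot_eq_cos_div_sin, div_eq_iff h1, Real.sin_sub, Real.cos_sub]
    linear_combination
      -(Real.cos β * Real.cos α + Real.sin β * Real.sin α) * hdet
  rw [hcotB] at hcot
  refine ⟨1, one_pos, ?_⟩
  have := abs_cot_shear_lt hdet hτ hc hd ha hcot
  simpa [cotTheta, hT, Matrix.mul_apply, Fin.sum_univ_two] using this
end

section
/- Let n ≥ 4 be an integer, and set R_{2n} = [[cos(π/n), −sin(π/n)], [sin(π/n), cos(π/n)]] and T_{2n} = [[1, 2·cot(π/(2n))], [0, 1]] in SL(2,ℝ). Then the subgroup of SL(2,ℝ) generated by R_{2n} and T_{2n} is discrete, i.e. it carries the discrete topology as a subspace of SL(2,ℝ). -/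
/-!
The matrix group acts on positive definite binary forms (equivalently, on the upper half-plane) by
`S ↦ g S gᵀ`.  In this model the group generated by `R` and `T` has the fundamental domain bounded
by the vertical strip `|Re z| < cot (π / 2n)` and by the wedge of opening `2π / n` at the fixed
point `i` of `R`.  Discreteness is a ping-pong argument with these two sets:

* a nontrivial power of `T` moves the strip off itself (`not_strip_zpow`);
* a power `R ^ j` with `0 < j < n` moves the wedge off itself (`not_wedge_pow`);
* strip and wedge together cover the whole space (`strip_or_wedge`), because the sides of the wedge
  end exactly at the boundary points `±cot (π / 2n)`, where the sides of the strip end as well.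

Since `R ^ n = -1`, each element of the group is, up to sign, an alternating product of such powers
(`word_of_mem_closure`).  Hence if the base point `S₀ = diag (2, 1)`, which lies in the interior of
the domain, is mapped into the (open) domain by an element of the group, that element is `±1`
(`Word.eq_one_or`).  This isolates the identity in the group, and left translation isolates every
other element.
-/

open Matrix

/-- Topology on `SL(2, ℝ)` induced from the space of 2×2 real matrices. -/
instance : TopologicalSpace (Matrix.SpecialLinearGroup (Fin 2) ℝ) :=
  TopologicalSpace.induced
    (fun A : Matrix.SpecialLinearGroup (Fin 2) ℝ => (A : Matrix (Fin 2) (Fin 2) ℝ))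
    inferInstance

namespace TriangleGroup

local notation "G" => Matrix.SpecialLinearGroup (Fin 2) ℝ

/-! ### The strip and the wedge -/

/-- The upper left entry of the form `g S₀ gᵀ`, where `S₀ = diag (2, 1)`. -/
def fa (g : G) : ℝ := 2 * g 0 0 ^ 2 + g 0 1 ^ 2

/-- The off-diagonal entry of the form `g S₀ gᵀ`, where `S₀ = diag (2, 1)`. -/
def fb (g : G) : ℝ := 2 * g 0 0 * g 1 0 + g 0 1 * g 1 1

/-- The lower right entry of the form `g S₀ gᵀ`, where `S₀ = diag (2, 1)`. -/
def fc (g : G) : ℝ := 2 * g 1 0 ^ 2 + g 1 1 ^ 2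

/-- The image of the base point under `g` lies in the vertical strip `|Re z| < m`. -/
def Strip (m : ℝ) (g : G) : Prop := |fb g| < m * fc g

/-- The image of the base point under `g` lies in the wedge of half-opening `d` (the angle being
that of the traceless part `(a - c, 2b)` of the form). -/
def Wedge (d : ℝ) (g : G) : Prop := |2 * fb g| * Real.cos d < (fa g - fc g) * Real.sin d

lemma det_eq (g : G) : g 0 0 * g 1 1 - g 0 1 * g 1 0 = 1 := by
  have := g.det_coe
  rwa [Matrix.det_fin_two] at this

lemma form_det (g : G) : fa g * fc g - fb g ^ 2 = 2 := by
  have h := det_eq g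
  unfold fa fb fc
  linear_combination 2 * (g 0 0 * g 1 1 - g 0 1 * g 1 0 + 1) * h

lemma fc_pos (g : G) : 0 < fc g := by
  have h := form_det g
  have ha : 0 ≤ fa g := by unfold fa; positivity
  have hc : 0 ≤ fc g := by unfold fc; positivity
  rcases hc.eq_or_lt with h0 | h0
  · rw [← h0] at h; nlinarith [sq_nonneg (fb g)]
  · exact h0

/-- The strip and the wedge cover the space when their sides end at the same boundary points, that
is, when `cot d = (m - 1 / m) / 2`. -/
lemma strip_or_wedge {m d : ℝ} (hm : 0 < m) (hs : 0 < Real.sin d)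
    (hmd : 2 * m * Real.cos d = (m ^ 2 - 1) * Real.sin d) (g : G) : Strip m g ∨ Wedge d g := by
  by_contra! h
  obtain ⟨h1, h2⟩ := h
  unfold Strip at h1
  unfold Wedge at h2
  rw [not_lt] at h1 h2
  have hc := fc_pos g
  have hdet := form_det g
  rw [← sq_abs] at hdet
  rw [abs_mul, abs_two] at h2
  have hb := abs_nonneg (fb g)
  generalize |fb g| = b at *
  generalize fa g = a at *
  generalize fc g = c at *
  have h3 : (a - c) * Real.sin d * (m * c) ≤ 2 * b * Real.cos d * (m * c) :=
    mul_le_mul_of_nonneg_right h2 (by positivity)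
  have h4 : (2 * m + (b - m * c) * (m * b + c)) * Real.sin d ≤ 0 := by
    have : (2 * m + (b - m * c) * (m * b + c)) * Real.sin d =
        (a - c) * Real.sin d * (m * c) - 2 * b * Real.cos d * (m * c) := by
      linear_combination (- m * Real.sin d) * hdet + b * c * hmd
    linarith
  have h5 : 0 < 2 * m + (b - m * c) * (m * b + c) := by
    have : 0 ≤ (b - m * c) * (m * b + c) := mul_nonneg (by linarith) (by positivity)
    linarith
  nlinarith [mul_pos h5 hs]

lemma strip_one {m : ℝ} (hm : 0 < m) : Strip m 1 := by
  simp [Strip, fb, fc, hm]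

lemma wedge_one {d : ℝ} (hs : 0 < Real.sin d) : Wedge d 1 := by
  norm_num [Wedge, fa, fb, fc, hs]

lemma strip_neg {m : ℝ} {g : G} : Strip m (-g) ↔ Strip m g := by
  simp [Strip, fb, fc]

lemma wedge_neg {d : ℝ} {g : G} : Wedge d (-g) ↔ Wedge d g := by
  simp [Wedge, fa, fb, fc]

/-! ### The motion of strip and wedge under the generators -/

lemma coe_zpow_T {T : G} {l : ℝ} (hT : (T : Matrix (Fin 2) (Fin 2) ℝ) = !![1, l; 0, 1]) (k : ℤ) :
    ((T ^ k : G) : Matrix (Fin 2) (Fin 2) ℝ) = !![1, k * l; 0, 1] := by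
  have hnat (k : ℕ) : ((T ^ k : G) : Matrix (Fin 2) (Fin 2) ℝ) = !![1, k * l; 0, 1] := by
    induction k with
    | zero => simp [Matrix.one_fin_two]
    | succ k ih =>
      rw [pow_succ, Matrix.SpecialLinearGroup.coe_mul, ih, hT]
      simp
      ring
  cases k with
  | ofNat k => simpa using hnat k
  | negSucc k =>
    rw [zpow_negSucc, Matrix.SpecialLinearGroup.coe_inv, hnat, Matrix.adjugate_fin_two_of]
    simp
    ring

lemma coe_pow_R {R : G} {d : ℝ} (hR : (R : Matrix (Fin 2) (Fin 2) ℝ) =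
      !![Real.cos d, -Real.sin d; Real.sin d, Real.cos d]) (j : ℕ) :
    ((R ^ j : G) : Matrix (Fin 2) (Fin 2) ℝ) =
      !![Real.cos (j * d), -Real.sin (j * d); Real.sin (j * d), Real.cos (j * d)] := by
  induction j with
  | zero => simp [Matrix.one_fin_two]
  | succ k ih =>
    rw [pow_succ, Matrix.SpecialLinearGroup.coe_mul, ih, hR]
    push_cast
    rw [add_mul, one_mul, Real.cos_add, Real.sin_add, Matrix.mul_fin_two]
    ext i j
    fin_cases i <;> fin_cases j <;> simp <;> ring

lemma not_strip_zpow {T : G} {m : ℝ}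
    (hT : (T : Matrix (Fin 2) (Fin 2) ℝ) = !![1, 2 * m; 0, 1]) (hm : 0 < m)
    {k : ℤ} (hk : k ≠ 0) {g : G} (hg : Strip m g) : ¬ Strip m (T ^ k * g) := by
  have hc := fc_pos g
  have hc' : fc (T ^ k * g) = fc g := by
    simp [fc, Matrix.mul_apply, coe_zpow_T hT]
  have hb' : fb (T ^ k * g) = fb g + 2 * k * m * fc g := by
    simp [fb, fc, Matrix.mul_apply, coe_zpow_T hT]
    ring
  unfold Strip at *
  rw [hc', hb']
  intro h
  rw [abs_lt] at hg h
  have hmc : 0 < m * fc g := by positivity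
  rcases lt_or_gt_of_ne hk with h0 | h0
  · have : (k : ℝ) ≤ -1 := by exact_mod_cast Int.le_sub_one_of_lt h0
    nlinarith
  · have : (1 : ℝ) ≤ k := by exact_mod_cast h0
    nlinarith

lemma not_wedge_pow {R : G} {d : ℝ} (hR : (R : Matrix (Fin 2) (Fin 2) ℝ) =
      !![Real.cos d, -Real.sin d; Real.sin d, Real.cos d]) (hd : 0 < d) (hc : 0 ≤ Real.cos d)
    {j n : ℕ} (hn : n * d = Real.pi) (hj : 0 < j) (hjn : j < n) {g : G} (hg : Wedge d g) :
    ¬ Wedge d (R ^ j * g) := by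
  have hj1 : (1 : ℝ) ≤ j := by exact_mod_cast hj
  have hj2 : (j : ℝ) + 1 ≤ n := by exact_mod_cast hjn
  have hplus : 0 ≤ Real.sin (j * d + d) :=
    Real.sin_nonneg_of_nonneg_of_le_pi (by positivity) (by nlinarith)
  have hminus : 0 ≤ Real.sin (j * d - d) :=
    Real.sin_nonneg_of_nonneg_of_le_pi (by nlinarith) (by nlinarith)
  rw [Real.sin_add] at hplus
  rw [Real.sin_sub] at hminus
  have hpy := Real.sin_sq_add_cos_sq (j * d)
  have hX : fa (R ^ j * g) - fc (R ^ j * g) =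
      (fa g - fc g) * (Real.cos (j * d) ^ 2 - Real.sin (j * d) ^ 2)
        - 2 * fb g * (2 * Real.sin (j * d) * Real.cos (j * d)) := by
    simp [fa, fb, fc, Matrix.mul_apply, coe_pow_R hR]
    ring
  have hY : 2 * fb (R ^ j * g) =
      (fa g - fc g) * (2 * Real.sin (j * d) * Real.cos (j * d))
        + 2 * fb g * (Real.cos (j * d) ^ 2 - Real.sin (j * d) ^ 2) := by
    simp [fa, fb, fc, Matrix.mul_apply, coe_pow_R hR]
    ring
  intro h
  unfold Wedge at hg h
  rw [hX, hY] at h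
  generalize fa g - fc g = X at *
  generalize 2 * fb g = Y at *
  generalize Real.sin (j * d) = s at *
  generalize Real.cos (j * d) = c at *
  generalize Real.sin d = S at *
  generalize Real.cos d = C at *
  generalize hX' : X * (c ^ 2 - s ^ 2) - Y * (2 * s * c) = X' at *
  generalize hY' : X * (2 * s * c) + Y * (c ^ 2 - s ^ 2) = Y' at *
  have g1 := mul_le_mul_of_nonneg_right (le_abs_self Y) hc
  have g2 := mul_le_mul_of_nonneg_right (neg_abs_le Y) hc
  have g3 := mul_le_mul_of_nonneg_right (le_abs_self Y') hc
  have g4 := mul_le_mul_of_nonneg_right (neg_abs_le Y') hc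
  -- `U` is the first coordinate of the direction halfway between `(X, Y)` and `(X', Y')`;
  -- the two wedge conditions force it to be positive and negative.
  obtain ⟨U, hU⟩ : ∃ U, U = X * c - Y * s := ⟨_, rfl⟩
  have e1 : 2 * U * (s * C + c * S) = (X * S - Y * C) + (X' * S + Y' * C) := by
    subst hU hX' hY'
    linear_combination (X * S - Y * C) * hpy
  have e2 : 2 * U * (s * C - c * S) = - ((X * S + Y * C) + (X' * S - Y' * C)) := by
    subst hU hX' hY'
    linear_combination -(X * S + Y * C) * hpy
  have p1 : 0 < 2 * U * (s * C + c * S) := by rw [e1]; linarith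
  have p2 : 2 * U * (s * C - c * S) < 0 := by rw [e2]; linarith
  have u1 : 0 < 2 * U := pos_of_mul_pos_left p1 hplus
  nlinarith [mul_nonneg u1.le hminus]

/-! ### Alternating words and ping-pong -/

/-- Alternating products, up to sign, of nontrivial powers of `T` and powers `R ^ j`, `0 < j < n`.
In `Word R T n b g`, the value `true` of `b` excludes that `g` starts with a power of `T`, and
`false` that it starts with a power of `R`; `±1` has both types. -/
inductive Word (R T : G) (n : ℕ) : Bool → G → Prop
  | one (b : Bool) : Word R T n b 1
  | neg_one (b : Bool) : Word R T n b (-1)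
  | T_mul (k : ℤ) (hk : k ≠ 0) (g : G) (h : Word R T n true g) : Word R T n false (T ^ k * g)
  | R_mul (j : ℕ) (hj : 0 < j) (hjn : j < n) (g : G) (h : Word R T n false g) :
      Word R T n true (R ^ j * g)

variable {R T : G} {n : ℕ}

lemma Word.neg {b : Bool} {g : G} (h : Word R T n b g) : Word R T n b (-g) := by
  induction h with
  | one b => exact .neg_one b
  | neg_one b => rw [neg_neg]; exact .one b
  | T_mul k hk g h ih => rw [← mul_neg]; exact .T_mul k hk _ ih
  | R_mul j hj hjn g h ih => rw [← mul_neg]; exact .R_mul j hj hjn _ ih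

lemma Word.zpow_mul {g : G} (h : Word R T n true g) (k : ℤ) : ∃ b, Word R T n b (T ^ k * g) := by
  by_cases hk : k = 0
  · exact ⟨true, by simpa [hk] using h⟩
  · exact ⟨false, .T_mul k hk g h⟩

lemma Word.pow_mul (hRn : R ^ n = -1) (hn : 0 < n) {g : G} (h : Word R T n false g) (j : ℕ) :
    ∃ b, Word R T n b (R ^ j * g) := by
  have key (i : ℕ) (hi : i < n) : ∃ b, Word R T n b (R ^ i * g) := by
    rcases Nat.eq_zero_or_pos i with h0 | h0
    · exact ⟨false, by simpa [h0] using h⟩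
    · exact ⟨true, .R_mul i h0 hi g h⟩
  obtain ⟨b, hb⟩ := key (j % n) (Nat.mod_lt _ hn)
  refine ⟨b, ?_⟩
  rw [← Nat.div_add_mod j n, pow_add, _root_.pow_mul, hRn]
  rcases neg_one_pow_eq_or G (j / n) with e | e
  · rwa [e, one_mul]
  · rw [e, neg_one_mul, neg_mul]
    exact hb.neg

lemma Word.exists_zpow_mul {b : Bool} {g : G} (h : Word R T n b g) :
    ∃ (k : ℤ) (g' : G), Word R T n true g' ∧ g = T ^ k * g' := by
  cases h with
  | one => exact ⟨0, 1, .one _, by simp⟩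
  | neg_one => exact ⟨0, -1, .neg_one _, by simp⟩
  | T_mul k hk g h => exact ⟨k, g, h, rfl⟩
  | R_mul j hj hjn g h => exact ⟨0, _, .R_mul j hj hjn g h, by simp⟩

lemma Word.exists_pow_mul {b : Bool} {g : G} (h : Word R T n b g) :
    ∃ (j : ℕ) (g' : G), Word R T n false g' ∧ g = R ^ j * g' := by
  cases h with
  | one => exact ⟨0, 1, .one _, by simp⟩
  | neg_one => exact ⟨0, -1, .neg_one _, by simp⟩
  | T_mul k hk g h => exact ⟨0, _, .T_mul k hk g h, by simp⟩
  | R_mul j hj hjn g h => exact ⟨j, g, h, rfl⟩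

lemma word_of_mem_closure (hRn : R ^ n = -1) (hn : 0 < n) {g : G}
    (hg : g ∈ Subgroup.closure {R, T}) : ∃ b, Word R T n b g := by
  have hRinv : R⁻¹ = -R ^ (n - 1) := by
    rw [inv_eq_iff_mul_eq_one, mul_neg, ← pow_succ', Nat.sub_add_cancel hn, hRn, neg_neg]
  induction hg using Subgroup.closure_induction_left with
  | one => exact ⟨true, .one _⟩
  | mul_left x hx y hy ih =>
    obtain ⟨b, hb⟩ := ih
    rcases hx with rfl | rfl
    · obtain ⟨j, g', h', rfl⟩ := hb.exists_pow_mul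
      rw [← mul_assoc, ← pow_succ']
      exact h'.pow_mul hRn hn _
    · obtain ⟨k, g', h', rfl⟩ := hb.exists_zpow_mul
      rw [← mul_assoc, ← _root_.zpow_one_add]
      exact h'.zpow_mul _
  | inv_mul_cancel x hx y hy ih =>
    obtain ⟨b, hb⟩ := ih
    rcases hx with rfl | rfl
    · obtain ⟨j, g', h', rfl⟩ := hb.exists_pow_mul
      rw [hRinv, neg_mul, ← mul_assoc, ← pow_add]
      obtain ⟨b', hb'⟩ := h'.pow_mul hRn hn (n - 1 + j)
      exact ⟨b', hb'.neg⟩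
    · obtain ⟨k, g', h', rfl⟩ := hb.exists_zpow_mul
      rw [← mul_assoc, ← _root_.zpow_neg_one, ← _root_.zpow_add]
      exact h'.zpow_mul _

/-- Ping-pong: a word other than `±1` moves the base point out of the strip if it starts with a
power of `T`, and out of the wedge if it starts with a power of `R`. -/
lemma Word.eq_one_or {m d : ℝ} (hm : 0 < m) (hs : 0 < Real.sin d)
    (hcover : ∀ g, Strip m g ∨ Wedge d g)
    (hT : ∀ k : ℤ, k ≠ 0 → ∀ g, Strip m g → ¬ Strip m (T ^ k * g))
    (hR : ∀ j : ℕ, 0 < j → j < n → ∀ g, Wedge d g → ¬ Wedge d (R ^ j * g))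
    {b : Bool} {g : G} (h : Word R T n b g) :
    g = 1 ∨ g = -1 ∨ if b then ¬ Wedge d g else ¬ Strip m g := by
  induction h with
  | one => simp
  | neg_one => simp
  | T_mul k hk g h ih =>
    have : Strip m g := by
      rcases ih with rfl | rfl | ih
      · exact strip_one hm
      · exact strip_neg.2 (strip_one hm)
      · exact (hcover g).resolve_right (by simpa using ih)
    exact Or.inr (Or.inr (by simpa using hT k hk g this))
  | R_mul j hj hjn g h ih =>
    have : Wedge d g := by
      rcases ih with rfl | rfl | ih
      · exact wedge_one hs
      · exact wedge_neg.2 (wedge_one hs)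
      · exact (hcover g).resolve_left (by simpa using ih)
    exact Or.inr (Or.inr (by simpa using hR j hj hjn g this))

/-! ### Topology -/

lemma continuous_coe : Continuous (fun g : G => (g : Matrix (Fin 2) (Fin 2) ℝ)) :=
  continuous_induced_dom

lemma continuous_entry (i j : Fin 2) : Continuous (fun g : G => g i j) :=
  continuous_coe.matrix_elem i j

lemma continuous_mul_left (x : G) : Continuous (fun g : G => x * g) := by
  refine continuous_induced_rng.2 ?_
  exact (continuous_const (y := (x : Matrix (Fin 2) (Fin 2) ℝ))).matrix_mul continuous_coe

lemma isOpen_strip (m : ℝ) : IsOpen {g : G | Strip m g} := by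
  have := continuous_entry
  unfold Strip fb fc
  exact isOpen_lt (by fun_prop) (by fun_prop)

lemma isOpen_wedge (d : ℝ) : IsOpen {g : G | Wedge d g} := by
  have := continuous_entry
  unfold Wedge fa fb fc
  exact isOpen_lt (by fun_prop) (by fun_prop)

/-- A subgroup is discrete as soon as an open neighbourhood `U` of the identity meets it in
at most `±1`. -/
lemma discrete_of_isolated (H : Subgroup G) (U : Set G) (hU : IsOpen U) (h1 : (1 : G) ∈ U)
    (h : ∀ g ∈ H, g ∈ U → g = 1 ∨ g = -1) : DiscreteTopology H := by
  rw [discreteTopology_iff_isOpen_singleton]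
  intro x
  -- The condition on the upper left entry separates `1` from `-1`.
  have hV : IsOpen (U ∩ {g : G | 0 < g 0 0}) :=
    hU.inter (isOpen_lt continuous_const (continuous_entry 0 0))
  have hcont : Continuous (fun y : H => (x : G)⁻¹ * (y : G)) :=
    (continuous_mul_left _).comp continuous_subtype_val
  convert hV.preimage hcont using 1
  ext y
  simp only [Set.mem_singleton_iff, Set.mem_preimage]
  constructor
  · rintro rfl
    rw [inv_mul_cancel]
    exact ⟨h1, by simp⟩
  · rintro ⟨hyU, hy0⟩
    rcases h _ (H.mul_mem (H.inv_mem x.2) y.2) hyU with e | e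
    · exact Subtype.ext (inv_mul_eq_one.1 e).symm
    · rw [e] at hy0
      norm_num at hy0

end TriangleGroup

open TriangleGroup in
theorem stmt_11 (n : ℕ) (hn : 4 ≤ n)
    (R T : Matrix.SpecialLinearGroup (Fin 2) ℝ)
    (hR : (R : Matrix (Fin 2) (Fin 2) ℝ) =
      !![Real.cos (Real.pi / n), -Real.sin (Real.pi / n);
         Real.sin (Real.pi / n), Real.cos (Real.pi / n)])
    (hT : (T : Matrix (Fin 2) (Fin 2) ℝ) =
      !![1, 2 * Real.cot (Real.pi / (2 * n)); 0, 1]) :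
    DiscreteTopology (Subgroup.closure {R, T} : Subgroup (Matrix.SpecialLinearGroup (Fin 2) ℝ)) := by
  have hn4 : (4 : ℝ) ≤ n := by exact_mod_cast hn
  have hn0 : (0 : ℝ) < n := by linarith
  have hpi := Real.pi_pos
  obtain ⟨e, he⟩ : ∃ e, e = Real.pi / (2 * n) := ⟨_, rfl⟩
  have hde : Real.pi / n = 2 * e := by rw [he]; field_simp
  rw [hde] at hR
  rw [← he] at hT
  have he0 : 0 < e := by rw [he]; positivity
  have hnd : n * (2 * e) = Real.pi := by rw [he]; field_simp
  have he8 : 8 * e ≤ Real.pi := by nlinarith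
  have hse : 0 < Real.sin e := Real.sin_pos_of_pos_of_lt_pi he0 (by linarith)
  have hce : 0 < Real.cos e := Real.cos_pos_of_mem_Ioo ⟨by linarith, by linarith⟩
  have hs : 0 < Real.sin (2 * e) := Real.sin_pos_of_pos_of_lt_pi (by linarith) (by linarith)
  have hc : 0 ≤ Real.cos (2 * e) := Real.cos_nonneg_of_mem_Icc ⟨by linarith, by linarith⟩
  have hm : 0 < Real.cot e := by rw [Real.cot_eq_cos_div_sin]; positivity
  have hmd : 2 * Real.cot e * Real.cos (2 * e) = (Real.cot e ^ 2 - 1) * Real.sin (2 * e) := by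
    rw [Real.cot_eq_cos_div_sin, Real.cos_two_mul', Real.sin_two_mul]
    field_simp
  have hRn : R ^ n = -1 := by
    apply Subtype.ext
    have := coe_pow_R hR n
    rw [hnd] at this
    rw [this]
    ext i j
    fin_cases i <;> fin_cases j <;> simp
  have hcover := strip_or_wedge hm hs hmd
  refine discrete_of_isolated _ ({g | Strip (Real.cot e) g} ∩ {g | Wedge (2 * e) g})
    ((isOpen_strip _).inter (isOpen_wedge _)) ⟨strip_one hm, wedge_one hs⟩ ?_
  rintro g hg ⟨hg1, hg2⟩
  obtain ⟨b, hb⟩ := word_of_mem_closure hRn (by omega) hg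
  rcases hb.eq_one_or hm hs hcover (fun k hk g hg => not_strip_zpow hT hm hk hg)
    (fun j hj hjn g hg => not_wedge_pow hR (by linarith) hc hnd hj hjn hg) with h | h | h
  · exact Or.inl h
  · exact Or.inr h
  · cases b
    · exact absurd hg1 (by simpa using h)
    · exact absurd hg2 (by simpa using h)
end

section
/- Let n ≥ 4 be an integer, and set R_{2n} = [[cos(π/n), −sin(π/n)], [sin(π/n), cos(π/n)]] and T_{2n} = [[1, 2·cot(π/(2n))], [0, 1]] in SL(2,ℝ). Let PSL(2,ℝ) denote the quotient of SL(2,ℝ) by its center {±I}. Then the group homomorphism from the free product (ℤ/nℤ) ∗ ℤ to PSL(2,ℝ) sending the generator of ℤ/nℤ to the class [R_{2n}] and the generator of ℤ to the class [T_{2n}] is well defined (since R_{2n}^n = −I) and injective; in particular ⟨[R_{2n}], [T_{2n}]⟩ ≤ PSL(2,ℝ) is isomorphic to (ℤ/nℤ) ∗ ℤ. -/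
/-!
The proof is the ping-pong lemma on the projective line, whose points are the lines through `0`
in `ℝ²`. With `β = π / (2n)`, so that `T` is translation by `2 cot β`, let the cone `C` consist of
the vectors `(x, y)` with `sin² β · x² > cos² β · y²`, that is, those making an angle less than `β`
with the horizontal axis, and let `C'` be given by the reverse strict inequality.

* A power `R ^ k` with `0 < k < n` rotates by `2kβ ∈ [2β, π - 2β]`, and hence maps `C` into `C'`
  (`rotation_cone`).
* A power `T ^ k` with `k ≠ 0` moves the affine coordinate `x / y`, of absolute value less than
  `cot β` on `C'`, by at least `2 cot β`, and hence maps `C'` into `C` (`shear_cone`).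

For the centre `±1` to act trivially, vectors are taken up to sign: a pair `±v` is encoded by
the rank one matrix `v vᵀ`, on which `g` acts as `A ↦ g A gᵀ`; this action factors through
the quotient by the centre.
-/

open Matrix


namespace TriangleGroup

open scoped Pointwise

/-! ### Ping-pong for binary free products -/

/-- The pair `A`, `B` as a family indexed by `Bool`, to compare `Monoid.Coprod` with
`Monoid.CoprodI`. -/
def Fam (A B : Type) : Bool → Type
  | true => A
  | false => B

instance Fam.group (A B : Type) [iA : Group A] [iB : Group B] : ∀ i, Group (Fam A B i)
  | true => iA
  | false => iB

/-- The family of homomorphisms on `Fam A B` given by `a` and `b`. -/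
def famHom {A B G : Type} [Group A] [Group B] [Group G] (a : A →* G) (b : B →* G) :
    ∀ i, Fam A B i →* G
  | true => a
  | false => b

/-- The ping-pong lemma for the free product of two groups, one of which is infinite. -/
theorem lift_injective_of_ping_pong {A B G α : Type} [Group A] [Group B] [Group G]
    [MulAction G α] [Infinite B] (a : A →* G) (b : B →* G) (X Y : Set α)
    (hX : X.Nonempty) (hY : Y.Nonempty) (hXY : Disjoint X Y)
    (ha : ∀ g, g ≠ 1 → ∀ y ∈ Y, a g • y ∈ X) (hb : ∀ g, g ≠ 1 → ∀ x ∈ X, b g • x ∈ Y) :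
    Function.Injective (Monoid.Coprod.lift a b) := by
  let e : Monoid.Coprod A B →* Monoid.CoprodI (Fam A B) :=
    Monoid.Coprod.lift (Monoid.CoprodI.of (M := Fam A B) (i := true))
      (Monoid.CoprodI.of (M := Fam A B) (i := false))
  let fr : ∀ i, Fam A B i →* Monoid.Coprod A B :=
    famHom (A := A) (B := B) Monoid.Coprod.inl Monoid.Coprod.inr
  let r : Monoid.CoprodI (Fam A B) →* Monoid.Coprod A B := Monoid.CoprodI.lift fr
  have hre : r.comp e = MonoidHom.id _ := by
    apply Monoid.Coprod.hom_ext
    · ext x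
      exact Monoid.CoprodI.lift_of fr (i := true) x
    · ext x
      exact Monoid.CoprodI.lift_of fr (i := false) x
  have he : Function.Injective e :=
    Function.LeftInverse.injective (g := r) fun x => DFunLike.congr_fun hre x
  have hfac : Monoid.Coprod.lift a b = (Monoid.CoprodI.lift (famHom a b)).comp e := by
    apply Monoid.Coprod.hom_ext
    · ext x
      exact (Monoid.CoprodI.lift_of (famHom a b) (i := true) x).symm
    · ext x
      exact (Monoid.CoprodI.lift_of (famHom a b) (i := false) x).symm
  rw [hfac, MonoidHom.coe_comp]
  refine Function.Injective.comp ?_ he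
  refine Monoid.CoprodI.lift_injective_of_ping_pong (famHom a b)
    (Or.inr ⟨false, ?_⟩) (fun i => cond i X Y) ?_ ?_ ?_
  · exact le_trans (Cardinal.natCast_le_aleph0 (n := 3)) (Cardinal.aleph0_le_mk B)
  · rintro (_ | _)
    exacts [hY, hX]
  · rintro (_ | _) (_ | _) h
    exacts [(h rfl).elim, hXY.symm, hXY, (h rfl).elim]
  · rintro (_ | _) (_ | _) h
    · exact (h rfl).elim
    · rintro g hg _ ⟨x, hx, rfl⟩
      exact hb g hg x hx
    · rintro g hg _ ⟨y, hy, rfl⟩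
      exact ha g hg y hy
    · exact (h rfl).elim

/-! ### One-parameter subgroups and the action on symmetric squares -/

/-- The group `SL(2, ℝ)`. -/
abbrev SL2 := Matrix.SpecialLinearGroup (Fin 2) ℝ

/-- The one-parameter group of rotations. -/
noncomputable def rot : Multiplicative ℝ →* SL2 where
  toFun t := ⟨!![Real.cos t.toAdd, -Real.sin t.toAdd; Real.sin t.toAdd, Real.cos t.toAdd], by
    rw [Matrix.det_fin_two_of]; nlinarith [Real.sin_sq_add_cos_sq t.toAdd]⟩
  map_one' := by
    ext i j; fin_cases i <;> fin_cases j <;> simp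
  map_mul' s t := by
    apply Subtype.ext
    change !![Real.cos (s.toAdd + t.toAdd), -Real.sin (s.toAdd + t.toAdd); Real.sin (s.toAdd + t.toAdd), Real.cos (s.toAdd + t.toAdd)] =
      !![Real.cos s.toAdd, -Real.sin s.toAdd; Real.sin s.toAdd, Real.cos s.toAdd] *
      !![Real.cos t.toAdd, -Real.sin t.toAdd; Real.sin t.toAdd, Real.cos t.toAdd]
    ext i j
    fin_cases i <;> fin_cases j <;> simp [Real.cos_add, Real.sin_add] <;> ring

/-- The one-parameter group of horizontal shears. -/
def shear : Multiplicative ℝ →* SL2 where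
  toFun t := ⟨!![1, t.toAdd; 0, 1], by rw [Matrix.det_fin_two_of]; ring⟩
  map_one' := by
    ext i j; fin_cases i <;> fin_cases j <;> simp
  map_mul' s t := by
    apply Subtype.ext
    change !![1, s.toAdd + t.toAdd; 0, 1] = !![1, s.toAdd; 0, 1] * !![1, t.toAdd; 0, 1]
    ext i j
    fin_cases i <;> fin_cases j <;> simp [add_comm]

theorem coe_rot (t : ℝ) : (rot (Multiplicative.ofAdd t)).1 =
    !![Real.cos t, -Real.sin t; Real.sin t, Real.cos t] := rfl

theorem coe_shear (t : ℝ) : (shear (Multiplicative.ofAdd t)).1 = !![1, t; 0, 1] := rfl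

/-- The action `A ↦ g A gᵀ` of `SL(2, ℝ)` on `2 × 2` matrices. -/
def act : SL2 →* Equiv.Perm (Matrix (Fin 2) (Fin 2) ℝ) :=
  letI : MulAction SL2 (Matrix (Fin 2) (Fin 2) ℝ) :=
    { smul := fun g A => g.1 * A * g.1ᵀ
      one_smul := fun A => by
        change (1 : SL2).1 * A * (1 : SL2).1ᵀ = A
        simp
      mul_smul := fun g h A => by
        change (g * h).1 * A * (g * h).1ᵀ = g.1 * (h.1 * A * h.1ᵀ) * g.1ᵀ
        simp [Matrix.mul_assoc] }
  MulAction.toPermHom SL2 (Matrix (Fin 2) (Fin 2) ℝ)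

theorem act_apply (g : SL2) (A : Matrix (Fin 2) (Fin 2) ℝ) : act g A = g.1 * A * g.1ᵀ := rfl

theorem act_center (g : SL2) (hg : g ∈ Subgroup.center SL2) : act g = 1 := by
  obtain ⟨r, hr, h⟩ := Matrix.SpecialLinearGroup.mem_center_iff.1 hg
  have hr2 : r * r = 1 := by simpa [sq] using hr
  ext1 A
  rw [act_apply, ← h]
  simp [← Matrix.smul_one_eq_diagonal, smul_smul, hr2]

/-- The action of `PSL(2, ℝ)` on matrices induced by `act`. -/
def pact : SL2 ⧸ Subgroup.center SL2 →* Equiv.Perm (Matrix (Fin 2) (Fin 2) ℝ) :=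
  QuotientGroup.lift _ act act_center

/-- The matrix `v vᵀ` for `v = (x, y)`, which encodes `v` up to sign. -/
def sqm (x y : ℝ) : Matrix (Fin 2) (Fin 2) ℝ := !![x * x, x * y; y * x, y * y]

theorem act_sqm (g : SL2) (x y : ℝ) :
    act g (sqm x y) = sqm (g.1 0 0 * x + g.1 0 1 * y) (g.1 1 0 * x + g.1 1 1 * y) := by
  rw [act_apply]
  ext i j
  fin_cases i <;> fin_cases j <;>
    simp [sqm, Matrix.mul_apply, Fin.sum_univ_two] <;> ring

/-! ### The ping-pong estimates -/

/-- Rotation by an angle `θ ∈ [2β, π - 2β]` maps the cone of half-angle `β` around the horizontal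
axis into the interior of its complement. -/
theorem rotation_cone {β θ : ℝ} (hβ : 0 < β) (h1 : 2 * β ≤ θ) (h2 : θ ≤ Real.pi - 2 * β)
    {x y : ℝ} (h : (Real.cos β * y) ^ 2 < (Real.sin β * x) ^ 2) :
    (Real.sin β * (Real.cos θ * x - Real.sin θ * y)) ^ 2 <
      (Real.cos β * (Real.sin θ * x + Real.cos θ * y)) ^ 2 := by
  -- Both quadratic forms split into linear factors `p * q`; in the coordinates `p`, `q` the
  -- rotation has, up to the factor `sin (2β)`, coefficients of known sign.
  set p := Real.sin β * x - Real.cos β * y with hp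
  set q := Real.sin β * x + Real.cos β * y with hq
  set p' := Real.sin β * (Real.cos θ * x - Real.sin θ * y) -
    Real.cos β * (Real.sin θ * x + Real.cos θ * y) with hp'
  set q' := Real.sin β * (Real.cos θ * x - Real.sin θ * y) +
    Real.cos β * (Real.sin θ * x + Real.cos θ * y) with hq'
  have hpq : 0 < p * q := by rw [hp, hq]; nlinarith
  suffices hs : p' * q' < 0 by rw [hp', hq'] at hs; nlinarith
  have s2 : 0 < Real.sin (2 * β) := Real.sin_pos_of_pos_of_lt_pi (by linarith) (by linarith)
  have sθ : 0 < Real.sin θ := Real.sin_pos_of_pos_of_lt_pi (by linarith) (by linarith)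
  have sm : 0 ≤ Real.sin (θ - 2 * β) :=
    Real.sin_nonneg_of_nonneg_of_le_pi (by linarith) (by linarith)
  have sp : 0 ≤ Real.sin (θ + 2 * β) :=
    Real.sin_nonneg_of_nonneg_of_le_pi (by linarith) (by linarith)
  have hcs := Real.sin_sq_add_cos_sq β
  have e1 : p' * Real.sin (2 * β) = -(p * Real.sin (θ - 2 * β) + q * Real.sin θ) := by
    rw [hp', hp, hq, Real.sin_sub, Real.sin_two_mul, Real.cos_two_mul]
    linear_combination (-2 * Real.sin θ * Real.cos β * y) * hcs
  have e2 : q' * Real.sin (2 * β) = p * Real.sin θ + q * Real.sin (θ + 2 * β) := by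
    rw [hq', hp, hq, Real.sin_add, Real.sin_two_mul, Real.cos_two_mul]
    linear_combination (-2 * Real.sin θ * Real.cos β * y) * hcs
  have key : (p' * Real.sin (2 * β)) * (q' * Real.sin (2 * β)) < 0 := by
    rw [e1, e2]
    have k1 : 0 < p * q * (Real.sin θ * Real.sin θ) := by positivity
    have k2 : 0 ≤ p * q * (Real.sin (θ - 2 * β) * Real.sin (θ + 2 * β)) := by positivity
    have k3 : 0 ≤ p ^ 2 * (Real.sin (θ - 2 * β) * Real.sin θ) := by positivity
    have k4 : 0 ≤ q ^ 2 * (Real.sin (θ + 2 * β) * Real.sin θ) := by positivity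
    nlinarith
  by_contra hcon
  push Not at hcon
  have : 0 ≤ (p' * q') * (Real.sin (2 * β) * Real.sin (2 * β)) := by positivity
  nlinarith

/-- Translation by a nonzero multiple of the width `2 |w|` moves the interval `(-|w|, |w|)` off
itself. -/
theorem shear_cone {u w : ℝ} {k : ℤ} (hk : k ≠ 0) (h : u ^ 2 < w ^ 2) :
    w ^ 2 < (u + k * (2 * w)) ^ 2 := by
  rw [sq_lt_sq] at h ⊢
  have hk1 : (1 : ℝ) ≤ |(k : ℝ)| := by exact_mod_cast Int.one_le_abs hk
  have h3 : |(k : ℝ) * (2 * w)| ≤ |u + k * (2 * w)| + |u| := by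
    have := abs_sub (u + k * (2 * w)) u
    rwa [add_sub_cancel_left] at this
  rw [abs_mul, abs_mul, abs_two] at h3
  nlinarith [abs_nonneg w]

/-- The matrices `v vᵀ` with `v` in the open cone of half-angle `β` around the horizontal axis. -/
def coneIn (β : ℝ) : Set (Matrix (Fin 2) (Fin 2) ℝ) :=
  {A | ∃ x y : ℝ, (Real.cos β * y) ^ 2 < (Real.sin β * x) ^ 2 ∧ A = sqm x y}

/-- The matrices `v vᵀ` with `v` in the interior of the complementary cone. -/
def coneOut (β : ℝ) : Set (Matrix (Fin 2) (Fin 2) ℝ) :=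
  {A | ∃ x y : ℝ, (Real.sin β * x) ^ 2 < (Real.cos β * y) ^ 2 ∧ A = sqm x y}

theorem disjoint_cones (β : ℝ) : Disjoint (coneOut β) (coneIn β) := by
  rw [Set.disjoint_left]
  rintro _ ⟨x, y, h, rfl⟩ ⟨x', y', h', e⟩
  have e0 : x * x = x' * x' := congrFun (congrFun e 0) 0
  have e1 : y * y = y' * y' := congrFun (congrFun e 1) 1
  rw [mul_pow, mul_pow, sq x, sq y, e0, e1] at h
  rw [mul_pow, mul_pow, sq x', sq y'] at h'
  exact lt_asymm h h'

end TriangleGroup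

open TriangleGroup in
theorem stmt_12 (n : ℕ) (hn : 4 ≤ n)
    (R T : Matrix.SpecialLinearGroup (Fin 2) ℝ)
    (hR : (R : Matrix (Fin 2) (Fin 2) ℝ) =
      !![Real.cos (Real.pi / n), -Real.sin (Real.pi / n);
         Real.sin (Real.pi / n), Real.cos (Real.pi / n)])
    (hT : (T : Matrix (Fin 2) (Fin 2) ℝ) =
      !![1, 2 * Real.cot (Real.pi / (2 * n)); 0, 1]) :
    ∃ f : Monoid.Coprod (Multiplicative (ZMod n)) (Multiplicative ℤ) →*
        Matrix.SpecialLinearGroup (Fin 2) ℝ ⧸ Subgroup.center (Matrix.SpecialLinearGroup (Fin 2) ℝ),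
      f (Monoid.Coprod.inl (Multiplicative.ofAdd (1 : ZMod n))) = QuotientGroup.mk R ∧
      f (Monoid.Coprod.inr (Multiplicative.ofAdd (1 : ℤ))) = QuotientGroup.mk T ∧
      Function.Injective f ∧
      f.range = Subgroup.closure {QuotientGroup.mk R, QuotientGroup.mk T} := by
  have hn0 : (0 : ℝ) < n := by exact_mod_cast (by omega : 0 < n)
  have : NeZero n := ⟨by omega⟩
  set β := Real.pi / (2 * n) with hβdef
  have hβ : 0 < β := by have := Real.pi_pos; positivity
  have hβn : Real.pi / n = 2 * β := by rw [hβdef]; field_simp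
  have hnβ : n * (2 * β) = Real.pi := by rw [hβdef]; field_simp
  have hn4 : (4 : ℝ) ≤ n := by exact_mod_cast hn
  have hβ2 : β < Real.pi / 2 := by nlinarith
  have hs : 0 < Real.sin β := Real.sin_pos_of_pos_of_lt_pi hβ (by linarith)
  have hc : 0 < Real.cos β := Real.cos_pos_of_mem_Ioo ⟨by linarith, hβ2⟩
  have hRr : R = rot (Multiplicative.ofAdd (2 * β)) := by
    apply Subtype.ext; rw [hR, hβn]; rfl
  have hTr : T = shear (Multiplicative.ofAdd (2 * Real.cot β)) := by
    apply Subtype.ext; rw [hT]; rfl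
  have hRk (k : ℕ) : R ^ k = rot (Multiplicative.ofAdd (k * (2 * β))) := by
    rw [hRr, ← map_pow, ← ofAdd_nsmul, nsmul_eq_mul]
  have hTk (k : ℤ) : T ^ k = shear (Multiplicative.ofAdd (k * (2 * Real.cot β))) := by
    rw [hTr, ← map_zpow, ← ofAdd_zsmul, zsmul_eq_mul]
  have hRn : (QuotientGroup.mk R : SL2 ⧸ Subgroup.center SL2) ^ n = 1 := by
    rw [← QuotientGroup.mk_pow, QuotientGroup.eq_one_iff, hRk, hnβ,
      Matrix.SpecialLinearGroup.mem_center_iff]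
    refine ⟨-1, by simp, ?_⟩
    rw [coe_rot]
    ext i j
    fin_cases i <;> fin_cases j <;> simp
  let a : Multiplicative (ZMod n) →* SL2 ⧸ Subgroup.center SL2 :=
    AddMonoidHom.toMultiplicativeLeft (ZMod.lift n
      ⟨zmultiplesHom (Additive (SL2 ⧸ Subgroup.center SL2)) (Additive.ofMul (QuotientGroup.mk R)),
        by simpa [← ofMul_pow] using congrArg Additive.ofMul hRn⟩)
  let b : Multiplicative ℤ →* SL2 ⧸ Subgroup.center SL2 := zpowersHom _ (QuotientGroup.mk T)
  have ha (k : ℕ) : a (Multiplicative.ofAdd (k : ZMod n)) = QuotientGroup.mk (R ^ k) := by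
    have h := ZMod.lift_coe n
      (⟨zmultiplesHom (Additive (SL2 ⧸ Subgroup.center SL2)) (Additive.ofMul (QuotientGroup.mk R)),
        by simpa [← ofMul_pow] using congrArg Additive.ofMul hRn⟩ :
          {f : ℤ →+ Additive (SL2 ⧸ Subgroup.center SL2) // f n = 0}) (k : ℤ)
    rw [Int.cast_natCast] at h
    refine (congrArg Additive.toMul h).trans ?_
    simp
  have hb (k : ℤ) : b (Multiplicative.ofAdd k) = QuotientGroup.mk (T ^ k) := by
    simp [b]
  have ha1 : a (Multiplicative.ofAdd (1 : ZMod n)) = QuotientGroup.mk R := by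
    simpa using ha 1
  have hb1 : b (Multiplicative.ofAdd (1 : ℤ)) = QuotientGroup.mk T := by
    simpa using hb 1
  refine ⟨Monoid.Coprod.lift a b, ha1, hb1, ?_, ?_⟩
  · have hinj : Function.Injective (Monoid.Coprod.lift (pact.comp a) (pact.comp b)) := by
      refine lift_injective_of_ping_pong (pact.comp a) (pact.comp b) (coneOut β) (coneIn β)
        ⟨_, 0, 1, by simpa using pow_pos hc 2, rfl⟩ ⟨_, 1, 0, by simpa using pow_pos hs 2, rfl⟩
        (disjoint_cones β) ?_ ?_
      · rintro g hg _ ⟨x, y, h, rfl⟩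
        set k := (Multiplicative.toAdd g).val with hk
        have hg' : g = Multiplicative.ofAdd (k : ZMod n) := by
          rw [hk, ZMod.natCast_zmod_val]; rfl
        have hk0 : 1 ≤ k := by
          rw [Nat.one_le_iff_ne_zero]
          intro h0
          exact hg (by rw [hg', h0]; simp)
        have hkn : k + 1 ≤ n := ZMod.val_lt _
        have hk0' : (1 : ℝ) ≤ k := by exact_mod_cast hk0
        have hkn' : (k : ℝ) + 1 ≤ n := by exact_mod_cast hkn
        have hcone := rotation_cone (θ := k * (2 * β)) hβ (by nlinarith) (by nlinarith) h
        refine ⟨_, _, hcone, ?_⟩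
        rw [hg', MonoidHom.comp_apply, ha, hRk]
        refine (act_sqm _ x y).trans ?_
        simp [coe_rot, sub_eq_add_neg]
      · rintro g hg _ ⟨x, y, h, rfl⟩
        set k := Multiplicative.toAdd g with hk
        have hg' : g = Multiplicative.ofAdd k := rfl
        have hk0 : k ≠ 0 := fun h0 => hg (by rw [hg', h0]; rfl)
        have hcone := shear_cone hk0 h
        refine ⟨x + k * (2 * Real.cot β) * y, y, ?_, ?_⟩
        · convert hcone using 2
          rw [Real.cot_eq_cos_div_sin]
          field_simp
        · rw [hg', MonoidHom.comp_apply, hb, hTk]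
          refine (act_sqm _ x y).trans ?_
          simp [coe_shear]
    rw [← Monoid.Coprod.comp_lift, MonoidHom.coe_comp] at hinj
    exact hinj.of_comp
  · apply le_antisymm
    · rw [Monoid.Coprod.range_lift]
      refine sup_le ?_ ?_
      · rintro _ ⟨g, rfl⟩
        have hg' : g = Multiplicative.ofAdd (((Multiplicative.toAdd g).val : ℕ) : ZMod n) := by
          rw [ZMod.natCast_zmod_val]; rfl
        rw [hg', ha, QuotientGroup.mk_pow]
        exact pow_mem (Subgroup.subset_closure (by simp)) _
      · rintro _ ⟨g, rfl⟩
        rw [show g = Multiplicative.ofAdd (Multiplicative.toAdd g) from rfl, hb,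
          QuotientGroup.mk_zpow]
        exact zpow_mem (Subgroup.subset_closure (by simp)) _
    · rw [Subgroup.closure_le]
      rintro _ (rfl | rfl)
      · exact ⟨Monoid.Coprod.inl (Multiplicative.ofAdd 1), ha1⟩
      · exact ⟨Monoid.Coprod.inr (Multiplicative.ofAdd 1), hb1⟩
end
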